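/- Let w be a weight structure on a triangulated category C and let D be a full triangulated subcategory of C such that w restricts to D, i.e., the pair (Obj D ∩ C_{w≤0}, Obj D ∩ C_{w≥0}) is a weight structure on D. Let n ≥ 0 be an integer, let M ∈ C_{w≤0} and N ∈ C_{w≥−n}, and let f : M → N be a morphism that factors through an object P of D (i.e., f = u₂ ∘ u₁ with u₁ : M → P, u₂ : P → N, P ∈ Obj D). Then f factors through some object of D_{[−n,0]}, i.e., through an object of D lying in C_{w≥−n} ∩ C_{w≤0}. -/

import Mathlib

/-! Weight truncation is applied twice inside the subcategory. In a decomposition `X → Q → Y` with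
`X` of weights `≤ 0` and `Y` of weights `≥ 1`, orthogonality kills `M → Y`, so `M → Q` lifts to `X`.
In a decomposition `A → X → B` with `A` of weights `≤ -n-1` and `B` of weights `≥ -n`,
orthogonality kills `A → N`, so `X → N` extends to `B`. Finally `B` has weights `≤ 0`, being an
extension of `A[1]` by `X`: since `C_{w≤0}` is the left orthogonal of `C_{w≥1}`, it is closed under
extensions. -/

open CategoryTheory CategoryTheory.Limits CategoryTheory.Pretriangulated

namespace CWH

/-- `X` is a retract of `Y`. -/
def IsRetract {C : Type*} [Category C] (X Y : C) : Prop :=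
  ∃ (i : X ⟶ Y) (r : Y ⟶ X), i ≫ r = 𝟙 X

/-- The Karoubi-closure of a class of objects: all retracts of its objects. -/
def retractClosure {C : Type*} [Category C] (S : Set C) : Set C :=
  {X : C | ∃ Y ∈ S, IsRetract X Y}

variable (C : Type*) [Category C] [HasZeroObject C] [HasShift C ℤ]
  [Preadditive C] [∀ n : ℤ, (shiftFunctor C n).Additive] [Pretriangulated C]

/-- A weight structure on a (pre)triangulated category (homological convention):
a pair of retract-closed classes `LE = C_{w≤0}` and `GE = C_{w≥0}` such that
`C_{w≤0} ⊆ C_{w≤0}[1]`, `C_{w≥0}[1] ⊆ C_{w≥0}`, `Hom(C_{w≤0}, C_{w≥0}[1]) = 0`,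
and every object admits a weight decomposition. -/
structure WeightStructure where
  LE : Set C
  GE : Set C
  retract_LE : ∀ ⦃X Y : C⦄, IsRetract X Y → Y ∈ LE → X ∈ LE
  retract_GE : ∀ ⦃X Y : C⦄, IsRetract X Y → Y ∈ GE → X ∈ GE
  shift_LE : ∀ ⦃X : C⦄, X ∈ LE → X⟦(-1 : ℤ)⟧ ∈ LE
  shift_GE : ∀ ⦃X : C⦄, X ∈ GE → X⟦(1 : ℤ)⟧ ∈ GE
  orthogonal : ∀ ⦃X Y : C⦄, X ∈ LE → Y ∈ GE → ∀ f : X ⟶ Y⟦(1 : ℤ)⟧, f = 0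
  decomp : ∀ M : C, ∃ (X Y : C) (f : X ⟶ M) (g : M ⟶ Y) (h : Y ⟶ X⟦(1 : ℤ)⟧),
    Triangle.mk f g h ∈ (distTriang C) ∧ X ∈ LE ∧ Y⟦(-1 : ℤ)⟧ ∈ GE

variable {C}

namespace WeightStructure

variable (w : WeightStructure C)

/-- `C_{w≤i} = C_{w≤0}[i]`. -/
def le (i : ℤ) : Set C := {X : C | X⟦(-i)⟧ ∈ w.LE}

/-- `C_{w≥i} = C_{w≥0}[i]`. -/
def ge (i : ℤ) : Set C := {X : C | X⟦(-i)⟧ ∈ w.GE}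

/-- `C_{w=i} = C_{w≤i} ∩ C_{w≥i}`. -/
def eqw (i : ℤ) : Set C := w.le i ∩ w.ge i

/-- `w` is bounded if every object lies in some `C_{w≤i}` and in some `C_{w≥i}`. -/
def IsBounded : Prop := ∀ X : C, (∃ i : ℤ, X ∈ w.le i) ∧ (∃ i : ℤ, X ∈ w.ge i)

end WeightStructure

/-- The extension-closure of a class `S` of objects: the smallest class containing
the zero objects and `S` and closed under extensions (distinguished triangles). -/
inductive ExtClosure (S : Set C) : C → Prop
  | zero (X : C) : IsZero X → ExtClosure S X
  | of (X : C) : X ∈ S → ExtClosure S X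
  | ext {A E B : C} (f : A ⟶ E) (g : E ⟶ B) (h : B ⟶ A⟦(1 : ℤ)⟧) :
      Triangle.mk f g h ∈ (distTriang C) → ExtClosure S A → ExtClosure S B → ExtClosure S E

/-- The smallest full Karoubi-closed (strict) triangulated subcategory containing `S`:
closure under zero objects, shifts, cones and retracts. -/
inductive TriangClosure (S : Set C) : C → Prop
  | of (X : C) : X ∈ S → TriangClosure S X
  | zero (X : C) : IsZero X → TriangClosure S X
  | shift (X : C) (n : ℤ) : TriangClosure S X → TriangClosure S (X⟦n⟧)
  | ext {X Y Z : C} (f : X ⟶ Y) (g : Y ⟶ Z) (h : Z ⟶ X⟦(1 : ℤ)⟧) :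
      Triangle.mk f g h ∈ (distTriang C) → TriangClosure S X → TriangClosure S Y →
      TriangClosure S Z
  | retract (X Y : C) : IsRetract X Y → TriangClosure S Y → TriangClosure S X

/-- A (strict) full triangulated subcategory, given by its class of objects:
it contains the zero objects and is closed under shifts and under the
two-out-of-three property for distinguished triangles. -/
structure IsTriangulatedSub (P : Set C) : Prop where
  zero : ∀ X : C, IsZero X → X ∈ P
  shift : ∀ X ∈ P, ∀ n : ℤ, X⟦n⟧ ∈ P
  ext₂ : ∀ ⦃X Y Z : C⦄ (f : X ⟶ Y) (g : Y ⟶ Z) (h : Z ⟶ X⟦(1 : ℤ)⟧),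
    Triangle.mk f g h ∈ (distTriang C) → X ∈ P → Z ∈ P → Y ∈ P
  ext₃ : ∀ ⦃X Y Z : C⦄ (f : X ⟶ Y) (g : Y ⟶ Z) (h : Z ⟶ X⟦(1 : ℤ)⟧),
    Triangle.mk f g h ∈ (distTriang C) → X ∈ P → Y ∈ P → Z ∈ P
  ext₁ : ∀ ⦃X Y Z : C⦄ (f : X ⟶ Y) (g : Y ⟶ Z) (h : Z ⟶ X⟦(1 : ℤ)⟧),
    Triangle.mk f g h ∈ (distTriang C) → Y ∈ P → Z ∈ P → X ∈ P

/-- A weight structure on the full (triangulated) subcategory of `C` whose objects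
are given by the class `P`; retracts are taken inside `P` and the distinguished
triangles of the subcategory are the distinguished triangles of `C` with vertices
in `P`. -/
structure IsWeightStructureOn (P LEs GEs : Set C) : Prop where
  le_sub : LEs ⊆ P
  ge_sub : GEs ⊆ P
  retract_le : ∀ ⦃X Y : C⦄, X ∈ P → IsRetract X Y → Y ∈ LEs → X ∈ LEs
  retract_ge : ∀ ⦃X Y : C⦄, X ∈ P → IsRetract X Y → Y ∈ GEs → X ∈ GEs
  shift_le : ∀ ⦃X : C⦄, X ∈ LEs → X⟦(-1 : ℤ)⟧ ∈ LEs
  shift_ge : ∀ ⦃X : C⦄, X ∈ GEs → X⟦(1 : ℤ)⟧ ∈ GEs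
  orthogonal : ∀ ⦃X Y : C⦄, X ∈ LEs → Y ∈ GEs → ∀ f : X ⟶ Y⟦(1 : ℤ)⟧, f = 0
  decomp : ∀ M ∈ P, ∃ (X Y : C) (f : X ⟶ M) (g : M ⟶ Y) (h : Y ⟶ X⟦(1 : ℤ)⟧),
    Triangle.mk f g h ∈ (distTriang C) ∧ X ∈ LEs ∧ Y⟦(-1 : ℤ)⟧ ∈ GEs

/-- The class of morphisms of `C` whose cone lies in `P`; the Verdier quotient
`C/P` is the localization of `C` at this class. -/
def coneIn (P : Set C) : MorphismProperty C := fun X Y f =>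
  ∃ (Z : C) (g : Y ⟶ Z) (h : Z ⟶ X⟦(1 : ℤ)⟧),
    Triangle.mk f g h ∈ (distTriang C) ∧ Z ∈ P

/-- A weight Postnikov tower for `M`: choices of weight truncations `trunc l = w_{≤l}M`
(with cones `conePt l = w_{≥l+1}M`), of the connecting morphisms between them that are
compatible with `𝟙 M`, and of the distinguished triangles
`w_{≤l}M → w_{≤l+1}M → M^{-l-1}[l+1] → (w_{≤l}M)[1]`; the objects `termAt l = M^{-l}`
lie in the heart and are the terms of the associated weight complex `t(M)`, whose
boundary morphisms `bd (l+1) l : M^{-l-1} → M^{-l}` are obtained by composing the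
connecting morphisms of two consecutive triangles. -/
structure WeightPostnikovTower (w : WeightStructure C) (M : C) where
  trunc : ℤ → C
  trunc_mem : ∀ l : ℤ, trunc l ∈ w.le l
  ι : ∀ l : ℤ, trunc l ⟶ M
  conePt : ℤ → C
  cone_mem : ∀ l : ℤ, conePt l ∈ w.ge (l + 1)
  coneπ : ∀ l : ℤ, M ⟶ conePt l
  coneδ : ∀ l : ℤ, conePt l ⟶ (trunc l)⟦(1 : ℤ)⟧
  trunc_dist : ∀ l : ℤ, Triangle.mk (ι l) (coneπ l) (coneδ l) ∈ (distTriang C)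
  step : ∀ l : ℤ, trunc l ⟶ trunc (l + 1)
  step_ι : ∀ l : ℤ, step l ≫ ι (l + 1) = ι l
  termAt : ℤ → C
  term_mem : ∀ l : ℤ, termAt l ∈ w.LE ∧ termAt l ∈ w.GE
  sπ : ∀ l : ℤ, trunc l ⟶ (termAt l)⟦l⟧
  sδ : ∀ l : ℤ, (termAt (l + 1))⟦(l + 1 : ℤ)⟧ ⟶ (trunc l)⟦(1 : ℤ)⟧
  step_dist : ∀ l : ℤ, Triangle.mk (step l) (sπ (l + 1)) (sδ l) ∈ (distTriang C)
  bd : ∀ i j : ℤ, termAt i ⟶ termAt j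
  bd_shape : ∀ i j : ℤ, j + 1 ≠ i → bd i j = 0
  bd_eq : ∀ l : ℤ,
    (shiftFunctor C (l + 1)).map (bd (l + 1) l) ≫
      (shiftFunctorAdd' C l 1 (l + 1) rfl).hom.app (termAt l) =
    sδ l ≫ (shiftFunctor C (1 : ℤ)).map (sπ l)

/-- The differential of the weight complex associated to a weight Postnikov tower,
in "homological" indexing: the `l`-th term `termAt l` is the `(-l)`-th term `M^{-l}`
of the weight complex. -/
def towerD {w : WeightStructure C} {M : C} (T : WeightPostnikovTower w M) :
    ∀ l : ℤ, T.termAt (l + 1) ⟶ T.termAt l :=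
  fun l => T.bd (l + 1) l

section Complexes

variable {X Y : ℤ → C}

/-- A morphism of ("homologically indexed") complexes. -/
def IsChainMapDown (X Y : ℤ → C) (dX : ∀ l : ℤ, X (l + 1) ⟶ X l)
    (dY : ∀ l : ℤ, Y (l + 1) ⟶ Y l) (f : ∀ l : ℤ, X l ⟶ Y l) : Prop :=
  ∀ l : ℤ, f (l + 1) ≫ dY l = dX l ≫ f l

/-- Two families of morphisms of complexes are chain homotopic. -/
def ChainHomotopicDown (X Y : ℤ → C) (dX : ∀ l : ℤ, X (l + 1) ⟶ X l)
    (dY : ∀ l : ℤ, Y (l + 1) ⟶ Y l) (f g : ∀ l : ℤ, X l ⟶ Y l) : Prop :=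
  ∃ s : ∀ l : ℤ, X l ⟶ Y (l + 1),
    ∀ l : ℤ, f (l + 1) - g (l + 1) = s (l + 1) ≫ dY (l + 1) + dX l ≫ s l

/-- Two complexes are homotopy equivalent (i.e., isomorphic in the homotopy category). -/
def HomotopyEquivDown (X Y : ℤ → C) (dX : ∀ l : ℤ, X (l + 1) ⟶ X l)
    (dY : ∀ l : ℤ, Y (l + 1) ⟶ Y l) : Prop :=
  ∃ (f : ∀ l : ℤ, X l ⟶ Y l) (g : ∀ l : ℤ, Y l ⟶ X l),
    IsChainMapDown X Y dX dY f ∧ IsChainMapDown Y X dY dX g ∧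
    ChainHomotopicDown X X dX dX (fun l => f l ≫ g l) (fun l => 𝟙 (X l)) ∧
    ChainHomotopicDown Y Y dY dY (fun l => g l ≫ f l) (fun l => 𝟙 (Y l))

end Complexes

lemma IsRetract.of_iso {D : Type*} [Category D] {X Y : D} (e : X ≅ Y) : IsRetract X Y :=
  ⟨e.hom, e.inv, e.hom_inv_id⟩

lemma IsRetract.map {D E : Type*} [Category D] [Category E] {X Y : D} (h : IsRetract X Y)
    (F : D ⥤ E) : IsRetract (F.obj X) (F.obj Y) := by
  obtain ⟨i, r, hir⟩ := h
  exact ⟨F.map i, F.map r, by rw [← F.map_comp, hir, F.map_id]⟩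

lemma mk_mem_distTriang_of_iso₂ {X Y Y' Z : C} {f : X ⟶ Y} {g : Y ⟶ Z} {h : Z ⟶ X⟦(1 : ℤ)⟧}
    (hT : Triangle.mk f g h ∈ distTriang C) (e : Y ≅ Y') :
    Triangle.mk (f ≫ e.hom) (e.inv ≫ g) h ∈ distTriang C :=
  isomorphic_distinguished _ hT _ <|
    Triangle.isoMk _ _ (Iso.refl X) e.symm (Iso.refl Z)
      (show (f ≫ e.hom) ≫ e.inv = 𝟙 X ≫ f by simp)
      (show (e.inv ≫ g) ≫ 𝟙 Z = e.inv ≫ g by simp)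
      (show h ≫ (𝟙 X)⟦(1 : ℤ)⟧' = 𝟙 Z ≫ h by simp)

lemma exists_distTriang_of_shift {A M B : C} {i : ℤ} {f : A ⟶ M⟦-i⟧} {g : M⟦-i⟧ ⟶ B}
    {h : B ⟶ A⟦(1 : ℤ)⟧} (hT : Triangle.mk f g h ∈ distTriang C) :
    ∃ (f' : A⟦i⟧ ⟶ M) (g' : M ⟶ B⟦i⟧) (h' : B⟦i⟧ ⟶ A⟦i⟧⟦(1 : ℤ)⟧),
      Triangle.mk f' g' h' ∈ distTriang C :=
  ⟨_, _, _, mk_mem_distTriang_of_iso₂ (Triangle.shift_distinguished _ hT i)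
    ((shiftFunctorCompIsoId C (-i) i (neg_add_cancel i)).app M)⟩

namespace WeightStructure

variable (w : WeightStructure C) {i j k : ℤ} {X Y : C}

lemma mem_le_of_isRetract (h : IsRetract X Y) (hY : Y ∈ w.le i) : X ∈ w.le i :=
  w.retract_LE (h.map (shiftFunctor C (-i))) hY

lemma mem_le_zero_iff : X ∈ w.le 0 ↔ X ∈ w.LE :=
  let e := (shiftFunctorZero' C (-0 : ℤ) neg_zero).app X
  ⟨w.retract_LE (.of_iso e.symm), w.retract_LE (.of_iso e)⟩

lemma shift_mem_le (h : i + k = j) (hX : X ∈ w.le i) : X⟦k⟧ ∈ w.le j :=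
  w.retract_LE (.of_iso ((shiftFunctorAdd' C k (-j) (-i) (by omega)).app X).symm) hX

lemma shift_mem_ge (h : i + k = j) (hX : X ∈ w.ge i) : X⟦k⟧ ∈ w.ge j :=
  w.retract_GE (.of_iso ((shiftFunctorAdd' C k (-j) (-i) (by omega)).app X).symm) hX

lemma monotone_le : Monotone w.le :=
  monotone_int_of_le_succ fun i X hX =>
    w.retract_LE (.of_iso ((shiftFunctorAdd' C (-i) (-1) (-(i + 1)) (by omega)).app X))
      (w.shift_LE hX)

lemma hom_eq_zero (hij : i < j) (hX : X ∈ w.le i) (hY : Y ∈ w.ge j) (f : X ⟶ Y) : f = 0 := by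
  let e : Y⟦1 - j⟧ ≅ Y⟦-j⟧⟦(1 : ℤ)⟧ := (shiftFunctorAdd' C (-j) 1 (1 - j) (by omega)).app Y
  have hX' : X⟦1 - j⟧ ∈ w.LE :=
    w.mem_le_zero_iff.mp (w.shift_mem_le (by omega) (w.monotone_le (Int.le_sub_one_of_lt hij) hX))
  apply (shiftFunctor C (1 - j)).map_injective
  rw [Functor.map_zero, ← cancel_mono e.hom, zero_comp]
  exact w.orthogonal hX' hY _

lemma exists_distTriang (M : C) (i : ℤ) :
    ∃ (X Y : C) (f : X ⟶ M) (g : M ⟶ Y) (h : Y ⟶ X⟦(1 : ℤ)⟧),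
      Triangle.mk f g h ∈ distTriang C ∧ X ∈ w.le i ∧ Y ∈ w.ge (i + 1) := by
  obtain ⟨A, B, _, _, _, hT, hA, hB⟩ := w.decomp (M⟦-i⟧)
  obtain ⟨f, g, h, hT'⟩ := exists_distTriang_of_shift hT
  exact ⟨_, _, f, g, h, hT', w.shift_mem_le (zero_add i) (w.mem_le_zero_iff.mpr hA),
    w.shift_mem_ge (add_comm 1 i) hB⟩

lemma mem_le_of_forall_hom_eq_zero (h : ∀ Y ∈ w.ge (i + 1), ∀ f : X ⟶ Y, f = 0) :
    X ∈ w.le i := by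
  obtain ⟨A, B, a, b, _, hT, hA, hB⟩ := w.exists_distTriang X i
  obtain ⟨s, hs⟩ : ∃ s : X ⟶ A, 𝟙 X = s ≫ a :=
    Triangle.coyoneda_exact₂ _ hT (𝟙 X) (h B hB _)
  exact w.mem_le_of_isRetract ⟨s, a, hs.symm⟩ hA

lemma mem_le_of_distTriang {Z : C} {f : X ⟶ Y} {g : Y ⟶ Z} {h : Z ⟶ X⟦(1 : ℤ)⟧}
    (hT : Triangle.mk f g h ∈ distTriang C) (hX : X ∈ w.le i) (hZ : Z ∈ w.le i) :
    Y ∈ w.le i := by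
  refine w.mem_le_of_forall_hom_eq_zero fun W hW φ => ?_
  obtain ⟨ψ, hψ⟩ : ∃ ψ : Z ⟶ W, φ = g ≫ ψ :=
    Triangle.yoneda_exact₂ _ hT φ (w.hom_eq_zero (lt_add_one i) hX hW _)
  rw [hψ, w.hom_eq_zero (lt_add_one i) hZ hW ψ, comp_zero]

end WeightStructure

namespace IsWeightStructureOn

variable {w : WeightStructure C} {P : Set C} {i j : ℤ} {M N Q : C}

lemma exists_distTriang (hres : IsWeightStructureOn P (P ∩ w.LE) (P ∩ w.GE))
    (hP : IsTriangulatedSub P) (hQ : Q ∈ P) (i : ℤ) :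
    ∃ (X Y : C) (f : X ⟶ Q) (g : Q ⟶ Y) (h : Y ⟶ X⟦(1 : ℤ)⟧),
      Triangle.mk f g h ∈ distTriang C ∧ X ∈ P ∩ w.le i ∧ Y ∈ P ∩ w.ge (i + 1) := by
  obtain ⟨A, B, _, _, _, hT, hA, hB⟩ := hres.decomp (Q⟦-i⟧) (hP.shift Q hQ _)
  obtain ⟨f, g, h, hT'⟩ := exists_distTriang_of_shift hT
  have hAP : A⟦i⟧ ∈ P := hP.shift A hA.1 i
  exact ⟨_, _, f, g, h, hT', ⟨hAP, w.shift_mem_le (zero_add i) (w.mem_le_zero_iff.mpr hA.2)⟩,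
    hP.ext₃ _ _ _ hT' hAP hQ, w.shift_mem_ge (add_comm 1 i) hB.2⟩

lemma exists_fac_of_mem_le (hres : IsWeightStructureOn P (P ∩ w.LE) (P ∩ w.GE))
    (hP : IsTriangulatedSub P) (hQ : Q ∈ P) (hM : M ∈ w.le i) (u : M ⟶ Q) :
    ∃ X ∈ P ∩ w.le i, ∃ (a : M ⟶ X) (b : X ⟶ Q), a ≫ b = u := by
  obtain ⟨X, Y, b, _, _, hT, hX, hY⟩ := hres.exists_distTriang hP hQ i
  obtain ⟨a, ha⟩ : ∃ a : M ⟶ X, u = a ≫ b :=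
    Triangle.coyoneda_exact₂ _ hT u (w.hom_eq_zero (lt_add_one i) hM hY.2 _)
  exact ⟨X, hX, a, b, ha.symm⟩

lemma exists_fac_of_mem_ge (hres : IsWeightStructureOn P (P ∩ w.LE) (P ∩ w.GE))
    (hP : IsTriangulatedSub P) (hji : j ≤ i) (hQ : Q ∈ P ∩ w.le i) (hN : N ∈ w.ge j)
    (u : Q ⟶ N) :
    ∃ B ∈ P ∩ (w.ge j ∩ w.le i), ∃ (a : Q ⟶ B) (b : B ⟶ N), a ≫ b = u := by
  obtain ⟨A, B, _, a, _, hT, hA, hB⟩ := hres.exists_distTriang hP hQ.1 (j - 1)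
  rw [sub_add_cancel] at hB
  obtain ⟨b, hb⟩ : ∃ b : B ⟶ N, u = a ≫ b :=
    Triangle.yoneda_exact₂ _ hT u (w.hom_eq_zero (sub_one_lt j) hA.2 hN _)
  have hA' : A⟦(1 : ℤ)⟧ ∈ w.le i :=
    w.monotone_le hji (w.shift_mem_le (sub_add_cancel j 1) hA.2)
  have hB' : B ∈ w.le i := w.mem_le_of_distTriang (rot_of_distTriang _ hT) hQ.2 hA'
  exact ⟨B, ⟨hB.1, hB.2, hB'⟩, a, b, hb.symm⟩

end IsWeightStructureOn

/-- if `w` restricts to a full triangulated subcategory `D` (with class of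
objects `P`), `M ∈ C_{w≤0}`, `N ∈ C_{w≥-n}` and `f : M ⟶ N` factors through an object
of `D`, then `f` factors through an object of `D_{[-n,0]}`. -/
theorem statement8 (w : WeightStructure C) (P : Set C) (hP : IsTriangulatedSub P)
    (hres : IsWeightStructureOn P (P ∩ w.LE) (P ∩ w.GE))
    (n : ℕ) (M N : C) (hM : M ∈ w.LE) (hN : N ∈ w.ge (-(n : ℤ)))
    (f : M ⟶ N) (Q : C) (hQ : Q ∈ P) (u₁ : M ⟶ Q) (u₂ : Q ⟶ N) (hf : u₁ ≫ u₂ = f) :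
    ∃ (Q' : C) (v₁ : M ⟶ Q') (v₂ : Q' ⟶ N),
      Q' ∈ P ∧ Q' ∈ w.ge (-(n : ℤ)) ∧ Q' ∈ w.LE ∧ v₁ ≫ v₂ = f := by
  obtain ⟨X, hX, a, b, hab⟩ := hres.exists_fac_of_mem_le hP hQ (w.mem_le_zero_iff.mpr hM) u₁
  obtain ⟨B, ⟨hBP, hBge, hBle⟩, c, d, hcd⟩ :=
    hres.exists_fac_of_mem_ge hP (by omega) hX hN (b ≫ u₂)
  exact ⟨B, a ≫ c, d, hBP, hBge, w.mem_le_zero_iff.mp hBle,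
    by rw [Category.assoc, hcd, ← Category.assoc, hab, hf]⟩

end CWH
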